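/- Let S = (S_n) be a non-degenerate linear recurrence sequence of order r over the ring of integers (or an integral domain of characteristic zero) whose minimal polynomial has distinct roots α_1,…,α_s with multiplicities m_1,…,m_s, Σ m_l = r. Suppose S is a divisibility sequence: S_0 = 0, S_1 = 1, and S_n ∣ S_{mn} for all m, n ≥ 1. Then for all n ≥ 0, S_n divides D_n := n^{Σ_l C(m_l,2)} · ∏_{l=1}^{s} α_l^{C(m_l,2)(n−1)} · ∏_{1 ≤ i < j ≤ s} ((α_j^n − α_i^n)/(α_j − α_i))^{m_i m_j}, where divisibility is in the ring generated by the terms of S and the roots α_l. -/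

import Mathlib

open Polynomial in
/-- Matrix of coefficients of `X^(h n) mod ∏ (X - t i)`. -/
noncomputable def resMat {A : Type*} [CommRing A] {r : ℕ} (t : Fin r → A) (n : ℕ) :
    Matrix (Fin r) (Fin r) A :=
  fun h k => ((X ^ (h.1 * n) : A[X]) %ₘ (∏ i, (X - C (t i)))).coeff k

/-- `x^(n-1) + x^(n-2) y + ... + y^(n-1)`. -/
def geo {A : Type*} [CommRing A] (n : ℕ) (x y : A) : A :=
  ∑ i ∈ Finset.range n, x ^ i * y ^ (n - 1 - i)

open Polynomial in
theorem natDegree_resMat_aux {A : Type*} [CommRing A] [Nontrivial A] {r : ℕ} (t : Fin r → A)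
    (p : A[X]) : (p %ₘ (∏ i, (X - C (t i)))).degree < r := by
  have hf : (∏ i, (X - C (t i))).Monic := monic_prod_of_monic _ _ fun i _ => monic_X_sub_C _
  have := degree_modByMonic_lt p hf
  rwa [degree_eq_natDegree hf.ne_zero, natDegree_prod_of_monic _ _ fun i _ => monic_X_sub_C _,
    Finset.sum_congr rfl (fun i _ => natDegree_X_sub_C (t i)), Finset.sum_const, Finset.card_univ,
    Fintype.card_fin, smul_eq_mul, mul_one] at this

open Polynomial in
theorem det_resMat_domain {A : Type*} [CommRing A] [IsDomain A] {r : ℕ} (t : Fin r → A)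
    (ht : Function.Injective t) (n : ℕ) :
    (resMat t n).det = ∏ i, ∏ j ∈ Finset.Ioi i, geo n (t j) (t i) := by
  have key : resMat t n * (Matrix.vandermonde t).transpose
      = (Matrix.vandermonde (fun i => t i ^ n)).transpose := by
    ext h i
    simp only [Matrix.mul_apply, resMat, Matrix.transpose_apply, Matrix.vandermonde_apply]
    have hf : (∏ i, (X - C (t i))).Monic := monic_prod_of_monic _ _ fun i _ => monic_X_sub_C _
    have h1 := modByMonic_add_div (X ^ (h.1 * n) : A[X]) (∏ i, (X - C (t i)))
    have h2 := congrArg (eval (t i)) h1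
    rw [eval_add, eval_mul, eval_prod,
      Finset.prod_eq_zero (i := i) (f := fun j => eval (t i) (X - C (t j))) (Finset.mem_univ i) (by simp), zero_mul,
      add_zero, eval_pow, eval_X] at h2
    rw [← pow_mul, mul_comm n, ← h2, Finset.sum_range
      (n := r) (f := fun k => (X ^ (h.1 * n) %ₘ (∏ i, (X - C (t i)))).coeff k * t i ^ k) |>.symm]
    rw [eval_eq_sum_range' (n := r)]
    by_cases h0 : (X ^ (h.1 * n) %ₘ (∏ i, (X - C (t i)))) = 0
    · rw [h0]; simpa using (Nat.zero_le _).trans_lt i.2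
    · exact (natDegree_lt_iff_degree_lt h0).2 (natDegree_resMat_aux t _)
  have hd := congrArg Matrix.det key
  rw [Matrix.det_mul, Matrix.det_transpose, Matrix.det_transpose, Matrix.det_vandermonde,
    Matrix.det_vandermonde] at hd
  have hne : ∏ i, ∏ j ∈ Finset.Ioi i, (t j - t i) ≠ 0 := by
    refine Finset.prod_ne_zero_iff.2 fun i _ => Finset.prod_ne_zero_iff.2 fun j hj => ?_
    have : i < j := by simpa using hj
    exact sub_ne_zero.2 fun h => this.ne' (ht h)
  apply mul_right_cancel₀ hne
  rw [hd, ← Finset.prod_mul_distrib]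
  refine Finset.prod_congr rfl fun i _ => ?_
  rw [← Finset.prod_mul_distrib]
  refine Finset.prod_congr rfl fun j _ => ?_
  exact (Commute.all _ _).geom_sum₂_mul n |>.symm

open Polynomial in
theorem det_resMat {A : Type*} [CommRing A] {r : ℕ} (t : Fin r → A) (n : ℕ) :
    (resMat t n).det = ∏ i, ∏ j ∈ Finset.Ioi i, geo n (t j) (t i) := by
  have h := det_resMat_domain (A := MvPolynomial (Fin r) ℤ) MvPolynomial.X
    (MvPolynomial.X_injective) n
  let φ : MvPolynomial (Fin r) ℤ →+* A := (MvPolynomial.aeval t).toRingHom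
  have hφ : ∀ i, φ (MvPolynomial.X i) = t i := fun i => MvPolynomial.aeval_X t i
  have h2 := congrArg φ h
  rw [RingHom.map_det] at h2
  have e : φ.mapMatrix (resMat MvPolynomial.X n) = resMat t n := by
    ext a b
    simp only [RingHom.mapMatrix_apply, Matrix.map_apply, resMat]
    rw [← coeff_map, map_modByMonic _ (monic_prod_of_monic _ _ fun i _ => monic_X_sub_C _)]
    simp [Polynomial.map_prod, hφ]
  rw [e] at h2
  rw [h2]
  simp [geo, hφ]

theorem prod_regroup {A : Type*} [CommRing A] (s : ℕ) (m : Fin s → ℕ) (r : ℕ)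
    (e : Fin r ≃o Σₗ l : Fin s, Fin (m l)) (g : Fin s → Fin s → A) :
    ∏ i, ∏ j ∈ Finset.Ioi i, g (e j).1 (e i).1 =
      (∏ l, g l l ^ (m l).choose 2) * ∏ i, ∏ j ∈ Finset.Ioi i, g j i ^ (m i * m j) := by
  have h1 : ∀ (x : Σₗ l : Fin s, Fin (m l)),
      ∏ j : Fin r, (if e.symm x < j then g (e j).1 x.1 else 1) =
      ∏ y : Σ l : Fin s, Fin (m l), (if x < toLex y then g y.1 x.1 else 1) := by
    intro x
    refine Fintype.prod_equiv e.toEquiv _ _ fun j => ?_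
    have : e.symm x < j ↔ x < e j := by rw [← e.lt_iff_lt, e.apply_symm_apply]
    simp only [this]
    rfl
  have h2 : ∏ i, ∏ j ∈ Finset.Ioi i, g (e j).1 (e i).1 =
      ∏ x : Σ l : Fin s, Fin (m l), ∏ y : Σ l : Fin s, Fin (m l),
        (if toLex x < toLex y then g y.1 x.1 else 1) := by
    refine Fintype.prod_equiv e.toEquiv _ _ fun i => ?_
    have := h1 (e i)
    rw [e.symm_apply_apply] at this
    refine Eq.trans ?_ this
    rw [← Finset.prod_filter]
    congr 1
    ext; simp
  rw [h2, Fintype.prod_sigma]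
  have h3 : ∀ l (a : Fin (m l)), ∏ y : Σ l : Fin s, Fin (m l),
        (if toLex (⟨l, a⟩ : Σ l : Fin s, Fin (m l)) < toLex y then g y.1 l else 1) =
        g l l ^ (Finset.Ioi a).card * ∏ j ∈ Finset.Ioi l, g j l ^ m j := by
    intro l a
    rw [Fintype.prod_sigma]
    have h4 : ∀ j, ∏ b : Fin (m j), (if toLex (⟨l, a⟩ : Σ l : Fin s, Fin (m l)) < toLex ⟨j, b⟩
        then g j l else 1) = (if j = l then g l l ^ (Finset.Ioi a).card else 1) *
          (if l < j then g j l ^ m j else 1) := by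
      intro j
      rcases lt_trichotomy l j with h | h | h
      · have : ∀ b : Fin (m j), toLex (⟨l, a⟩ : Σ l : Fin s, Fin (m l)) < toLex ⟨j, b⟩ :=
          fun b => Sigma.Lex.left _ _ h
        simp [this, h, h.ne']
      · subst h
        have : ∀ b : Fin (m l), toLex (⟨l, a⟩ : Σ l : Fin s, Fin (m l)) < toLex ⟨l, b⟩ ↔ a < b := by
          intro b
          constructor
          · intro h
            rcases Sigma.lex_iff.1 h with h | ⟨h, h'⟩
            · exact absurd h (lt_irrefl _)
            · exact h'
          · exact fun h => Sigma.Lex.right _ _ h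
        simp only [this, ← Finset.prod_filter]
        simp [Finset.filter_lt_eq_Ioi]
      · have : ∀ b : Fin (m j), ¬ toLex (⟨l, a⟩ : Σ l : Fin s, Fin (m l)) < toLex ⟨j, b⟩ := by
          intro b h'
          rcases Sigma.lex_iff.1 h' with h' | ⟨h', _⟩
          · exact absurd h' h.asymm
          · exact h.ne' h'
        simp [this, h.asymm, h.ne]
    rw [Finset.prod_congr rfl fun j _ => h4 j, Finset.prod_mul_distrib, ← Finset.prod_filter,
      ← Finset.prod_filter]
    congr 1
    · simp [Finset.filter_eq']
    · congr 1; ext; simp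
  rw [← Finset.prod_mul_distrib]
  refine Finset.prod_congr rfl fun l _ => ?_
  rw [Finset.prod_congr rfl fun a _ => h3 l a, Finset.prod_mul_distrib, Finset.prod_pow_eq_pow_sum]
  congr 1
  · congr 1
    simp only [Fin.card_Ioi]
    rw [Fin.sum_univ_eq_sum_range (fun x => m l - 1 - x),
      Finset.sum_range_reflect (fun x => x), Finset.sum_range_id, Nat.choose_two_right]
  · rw [Finset.prod_const, Finset.card_univ, Fintype.card_fin, ← Finset.prod_pow]
    refine Finset.prod_congr rfl fun j _ => ?_
    rw [← pow_mul, mul_comm]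

open Polynomial in
theorem divides_det {R : Type*} [CommRing R] [Nontrivial R] {r : ℕ} (hr : 2 ≤ r) (t : Fin r → R)
    (S : ℕ → R)
    (hrec : ∀ n, ∑ i ∈ Finset.range (r + 1), (∏ i, (X - C (t i))).coeff i * S (n + i) = 0)
    (hS1 : S 1 = 1) (n : ℕ) (hdiv : ∀ k, S n ∣ S (k * n)) :
    S n ∣ (resMat t n).det := by
  set f := ∏ i, (X - C (t i)) with hf'
  have hf : f.Monic := monic_prod_of_monic _ _ fun i _ => monic_X_sub_C _
  have hdeg : f.natDegree = r := by
    rw [hf', natDegree_prod_of_monic _ _ fun i _ => monic_X_sub_C _]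
    simp
  let L : R[X] →ₗ[R] R := Polynomial.lsum fun i => (LinearMap.id : R →ₗ[R] R).smulRight (S i)
  have hL : ∀ p : R[X], L p = p.sum fun i a => a * S i := fun p => rfl
  have hLX : ∀ k, L (X ^ k) = S k := by
    intro k
    rw [hL, ← monomial_one_right_eq_X_pow, sum_monomial_index] <;> simp
  have hLm : ∀ k, L (X ^ k * f) = 0 := by
    intro k
    rw [f.as_sum_range, hdeg, Finset.mul_sum, map_sum, ← hrec k]
    refine Finset.sum_congr rfl fun i _ => ?_
    rw [hL, ← monomial_one_right_eq_X_pow, monomial_mul_monomial, sum_monomial_index] <;> simp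
  have hLf : ∀ q : R[X], L (f * q) = 0 := by
    intro q
    rw [q.as_sum_range_C_mul_X_pow, Finset.mul_sum, map_sum]
    refine Finset.sum_eq_zero fun i _ => ?_
    rw [show f * (C (q.coeff i) * X ^ i) = q.coeff i • (X ^ i * f) by rw [smul_eq_C_mul]; ring,
      map_smul, hLm, smul_zero]
  have hM : (resMat t n).mulVec (fun k => S k) = fun h => S (h.1 * n) := by
    ext h
    rw [← hLX, ← modByMonic_add_div (X ^ (h.1 * n) : R[X]) f, map_add, hLf, add_zero, hL,
      sum_over_range' _ (by simp) r]
    · rw [Finset.sum_range]; rfl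
    · have := natDegree_modByMonic_lt (X ^ (h.1 * n) : R[X]) hf (by
        intro h; rw [h] at hdeg; simp at hdeg; omega)
      omega
  choose v hv using hdiv
  have h1 := congrArg ((resMat t n).adjugate.mulVec) hM
  rw [Matrix.mulVec_mulVec, Matrix.adjugate_mul, Matrix.smul_mulVec, Matrix.one_mulVec] at h1
  have h2 := congrFun h1 ⟨1, hr⟩
  simp only [Pi.smul_apply, hS1, smul_eq_mul, mul_one] at h2
  rw [h2, Matrix.mulVec, dotProduct]
  refine Finset.dvd_sum fun h _ => ?_
  rw [hv]
  exact Dvd.intro _ (mul_left_comm _ _ _)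



/-- A non-degenerate linear recurrence divisibility sequence `S` of order `r`,
with characteristic polynomial `∏ (x - α_l)^{m_l}`, divides the refined resultant sequence
`D_n = n^{Σ C(m_l,2)} · ∏ α_l^{C(m_l,2)(n-1)} · ∏_{i<j} ((α_j^n - α_i^n)/(α_j - α_i))^{m_i m_j}`,
divisibility being taken in the (sub)ring generated by the terms of `S` and the roots `α_l`. -/
theorem divisibility_sequence_divides_resultant
    {F : Type*} [Field F] [CharZero F]
    (s : ℕ) (m : Fin s → ℕ) (hm : ∀ l, 0 < m l)
    (r : ℕ) (hr : r = ∑ l, m l)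
    (α : Fin s → F) (hα0 : ∀ l, α l ≠ 0) (hinj : Function.Injective α)
    (hnd : ∀ i j : Fin s, i ≠ j → ∀ k : ℕ, 1 ≤ k → (α i / α j) ^ k ≠ 1)
    (S : ℕ → F)
    (hSrec : ∀ n : ℕ,
      ∑ i ∈ Finset.range (r + 1),
        (∏ l, (Polynomial.X - Polynomial.C (α l)) ^ m l : Polynomial F).coeff i * S (n + i) = 0)
    (hS0 : S 0 = 0) (hS1 : S 1 = 1)
    (hdiv : ∀ n, 1 ≤ n → ∀ k, 1 ≤ k →
      ∃ t ∈ Subring.closure (Set.range S ∪ Set.range α), S (k * n) = S n * t) :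
    ∀ n : ℕ,
      ∃ t ∈ Subring.closure (Set.range S ∪ Set.range α),
        ((n : F) ^ (∑ l, (m l).choose 2)) *
            (∏ l, α l ^ ((m l).choose 2 * (n - 1))) *
            (∏ i : Fin s, ∏ j ∈ Finset.Ioi i,
              ((α j ^ n - α i ^ n) / (α j - α i)) ^ (m i * m j)) = S n * t := by
  classical
  have hprod : ∀ (A : Type _) [CommRing A] (e : Fin r ≃o Σₗ l : Fin s, Fin (m l)) (β : Fin s → A),
      ∏ i, (Polynomial.X - Polynomial.C (β (e i).1)) =
        ∏ l, (Polynomial.X - Polynomial.C (β l)) ^ m l := by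
    intro A _ e β
    have : ∏ i, (Polynomial.X - Polynomial.C (β (e i).1)) =
        ∏ x : Σ l : Fin s, Fin (m l), (Polynomial.X - Polynomial.C (β x.1)) :=
      Fintype.prod_equiv e.toEquiv _ _ fun j => rfl
    rw [this, Fintype.prod_sigma]
    simp
  let e : Fin r ≃o Σₗ l : Fin s, Fin (m l) :=
    monoEquivOfFin _ (by
      rw [hr]
      exact (Fintype.card_sigma (α := fun l : Fin s => Fin (m l))).trans (by simp))
  have hmonic : (∏ l, (Polynomial.X - Polynomial.C (α l)) ^ m l : Polynomial F).Monic :=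
    Polynomial.monic_prod_of_monic _ _ fun i _ => (Polynomial.monic_X_sub_C _).pow _
  have hdeg : (∏ l, (Polynomial.X - Polynomial.C (α l)) ^ m l : Polynomial F).natDegree = r := by
    rw [Polynomial.natDegree_prod_of_monic _ _ fun i _ => (Polynomial.monic_X_sub_C _).pow _, hr]
    simp
  have hcr : (∏ l, (Polynomial.X - Polynomial.C (α l)) ^ m l : Polynomial F).coeff r = 1 := by
    have := hmonic.coeff_natDegree
    rwa [hdeg] at this
  have hr2 : 2 ≤ r := by
    by_contra hlt
    have h := hSrec (1 - r)
    rw [Finset.sum_range_succ, hcr] at h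
    rw [Finset.sum_eq_zero, show 1 - r + r = 1 by omega, hS1] at h
    · simp at h
    · intro i hi
      have := Finset.mem_range.1 hi
      rw [show 1 - r + i = 0 by omega, hS0, mul_zero]
  intro n
  set R := Subring.closure (Set.range S ∪ Set.range α) with hR
  let S' : ℕ → R := fun k => ⟨S k, Subring.subset_closure (Or.inl ⟨k, rfl⟩)⟩
  let β : Fin s → R := fun l => ⟨α l, Subring.subset_closure (Or.inr ⟨l, rfl⟩)⟩
  have hmap : ((∏ l, (Polynomial.X - Polynomial.C (β l)) ^ m l : Polynomial R)).map R.subtype =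
      ∏ l, (Polynomial.X - Polynomial.C (α l)) ^ m l := by
    simp [Polynomial.map_prod, β]
  have hd := divides_det hr2 (fun i => β (e i).1) S' (by
    intro k
    rw [hprod]
    apply Subtype.ext
    have := hSrec k
    rw [← hmap] at this
    simp only [Polynomial.coeff_map] at this
    refine Eq.trans ?_ this
    simp [S']) (Subtype.ext hS1) n (by
    intro k
    rcases Nat.eq_zero_or_pos n with rfl | hn
    · simp
    rcases Nat.eq_zero_or_pos k with rfl | hk
    · rw [zero_mul, show S' 0 = 0 from Subtype.ext hS0]; exact dvd_zero _
    obtain ⟨t, ht, h⟩ := hdiv n hn k hk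
    exact ⟨⟨t, ht⟩, Subtype.ext h⟩)
  rw [det_resMat, prod_regroup s m r e (fun j i => geo n (β j) (β i))] at hd
  obtain ⟨t, ht⟩ := hd
  refine ⟨t, t.2, ?_⟩
  have ht' := congrArg R.subtype ht
  rw [map_mul R.subtype (S' n) t] at ht'
  refine Eq.trans ?_ ht'
  have hgeo : ∀ i j, R.subtype (geo n (β i) (β j)) = geo n (α i) (α j) := by
    intro i j
    simp [geo, β]
  have hself : ∀ x : F, geo n x x = n * x ^ (n - 1) := fun x => by
    unfold geo
    exact geom_sum₂_self x n
  simp only [map_mul, map_prod, map_pow, hgeo, hself]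
  congr 1
  · simp only [mul_pow, Finset.prod_mul_distrib, Finset.prod_pow_eq_pow_sum]
    congr 1
    refine Finset.prod_congr rfl fun l _ => ?_
    rw [← pow_mul, mul_comm]
  · refine Finset.prod_congr rfl fun i _ => Finset.prod_congr rfl fun j hj => ?_
    have hij : i < j := by simpa using hj
    congr 1
    rw [div_eq_iff (sub_ne_zero.2 fun h => hij.ne' (hinj h))]
    exact ((Commute.all _ _).geom_sum₂_mul n).symm
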